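/- arXiv:1907.13452 — 2 statements merged into one kernel-verified Lean document; each statement's English description precedes it below -/
import Mathlib

section
/- Let ε ≥ 0, N ∈ ℕ, and let P ∈ ℝ^{N×N} be a matrix with all entries nonnegative. Let x⁰ ∈ ℝ^N have all components nonnegative, and define x^{k+1} = x^k P and x̂⁰ = x⁰, x̂^{k+1} = Γ_ε(x̂^k P), where Γ_ε(v)_i = v_i if v_i > ε and 0 otherwise. Then for every k ≥ 1, ∑_{i : x^k_i > ε} x^k_i ≥ ∑_{i=1}^N x̂^k_i; equivalently, ‖Γ_ε(x^k)‖₁ ≥ ‖x̂^k‖₁. -/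
/-!
Thresholding is monotone on nonnegative vectors and decreases them, and `v ↦ v P` is monotone
because `P ≥ 0`, so `x̂^k ≤ x^k` componentwise by induction. Hence
`x̂^(k+1) = Γ_ε(x̂^k P) ≤ Γ_ε(x^k P) = Γ_ε(x^(k+1))`, and it remains to sum the components. The
bound starts at `k = 1` because `x̂⁰` has not been thresholded.
-/

/-- The thresholding map `Γ_ε`: it keeps every component of a vector that
exceeds `ε` and zeroes out all the others. -/
noncomputable def Gamma (ε : ℝ) {N : ℕ} (v : Fin N → ℝ) : Fin N → ℝ :=
  fun i => if ε < v i then v i else 0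

section Threshold

variable {ι R : Type*} [Zero R] [Preorder R] [DecidableLT R]

/-- The thresholding map `Γ_ε` for vectors with an arbitrary index type and entries in a preorder
with zero. The comparison with `ε` is strict and uses no absolute value, as in `Gamma`. -/
def threshold (ε : R) (v : ι → R) : ι → R :=
  fun i => if ε < v i then v i else 0

theorem Gamma_eq_threshold (ε : ℝ) {N : ℕ} (v : Fin N → ℝ) : Gamma ε v = threshold ε v :=
  rfl

theorem threshold_le_self (ε : R) {v : ι → R} (hv : 0 ≤ v) : threshold ε v ≤ v := by
  intro i
  unfold threshold
  split_ifs
  · exact le_rfl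
  · exact hv i

theorem threshold_le_threshold (ε : R) {v w : ι → R} (hw : 0 ≤ w) (hvw : v ≤ w) :
    threshold ε v ≤ threshold ε w := by
  intro i
  unfold threshold
  split_ifs with hv_gt hw_gt
  · exact hvw i
  · exact absurd (hv_gt.trans_le (hvw i)) hw_gt
  · exact hw i
  · exact le_rfl

end Threshold

theorem sum_threshold {ι R : Type*} [Fintype ι] [AddCommMonoid R] [Preorder R] [DecidableLT R]
    (ε : R) (v : ι → R) :
    ∑ i, threshold ε v i = ∑ i ∈ Finset.univ.filter (fun i => ε < v i), v i :=
  (Finset.sum_filter _ _).symm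

section Iteration

variable {ι R : Type*} {T : (ι → R) → ι → R} {x xh : ℕ → ι → R}

theorem iterate_nonneg [Zero R] [Preorder R] (hT : Monotone T) (hT_zero : 0 ≤ T 0)
    (hx_init : 0 ≤ x 0) (hx_step : ∀ k, x (k + 1) = T (x k)) (k : ℕ) : 0 ≤ x k :=
  hT.seq_le_seq (x := fun _ => 0) k hx_init (fun _ _ => hT_zero) fun k _ => (hx_step k).ge

theorem thresholded_iterate_le_iterate [Zero R] [Preorder R] [DecidableLT R] {ε : R}
    (hT : Monotone T) (hx_nonneg : ∀ k, 0 ≤ x k) (hx_step : ∀ k, x (k + 1) = T (x k))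
    (hxh_init : xh 0 ≤ x 0) (hxh_step : ∀ k, xh (k + 1) = threshold ε (T (xh k))) (k : ℕ) :
    xh k ≤ x k := by
  induction k with
  | zero => exact hxh_init
  | succ k ih =>
    have hTx_nonneg : 0 ≤ T (x k) := hx_step k ▸ hx_nonneg (k + 1)
    calc xh (k + 1) = threshold ε (T (xh k)) := hxh_step k
      _ ≤ threshold ε (T (x k)) := threshold_le_threshold ε hTx_nonneg (hT ih)
      _ ≤ T (x k) := threshold_le_self ε hTx_nonneg
      _ = x (k + 1) := (hx_step k).symm

theorem thresholded_iterate_succ_le_threshold [Zero R] [Preorder R] [DecidableLT R] {ε : R}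
    (hT : Monotone T) (hx_nonneg : ∀ k, 0 ≤ x k) (hx_step : ∀ k, x (k + 1) = T (x k))
    (hxh_init : xh 0 ≤ x 0) (hxh_step : ∀ k, xh (k + 1) = threshold ε (T (xh k))) (k : ℕ) :
    xh (k + 1) ≤ threshold ε (x (k + 1)) := by
  have hxh_le : xh k ≤ x k :=
    thresholded_iterate_le_iterate hT hx_nonneg hx_step hxh_init hxh_step k
  rw [hxh_step]
  refine threshold_le_threshold ε (hx_nonneg (k + 1)) ?_
  exact (hT hxh_le).trans_eq (hx_step k).symm

theorem thresholded_mass_lower_bound_general [Fintype ι] [AddCommMonoid R] [PartialOrder R]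
    [IsOrderedAddMonoid R] [DecidableLT R] {ε : R} (hT : Monotone T) (hT_zero : 0 ≤ T 0)
    (hx_init : 0 ≤ x 0) (hx_step : ∀ k, x (k + 1) = T (x k))
    (hxh_init : xh 0 ≤ x 0) (hxh_step : ∀ k, xh (k + 1) = threshold ε (T (xh k)))
    (k : ℕ) (hk : 1 ≤ k) :
    ∑ i, xh k i ≤ ∑ i ∈ Finset.univ.filter (fun i => ε < x k i), x k i := by
  obtain ⟨m, rfl⟩ := Nat.exists_eq_add_of_le' hk
  have hx_nonneg : ∀ k, 0 ≤ x k := iterate_nonneg hT hT_zero hx_init hx_step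
  calc ∑ i, xh (m + 1) i ≤ ∑ i, threshold ε (x (m + 1)) i :=
        Finset.sum_le_sum fun i _ =>
          thresholded_iterate_succ_le_threshold hT hx_nonneg hx_step hxh_init hxh_step m i
    _ = ∑ i ∈ Finset.univ.filter (fun i => ε < x (m + 1) i), x (m + 1) i := sum_threshold ε _

end Iteration

theorem vecMul_monotone_of_nonneg {m n R : Type*} [Fintype m] [Semiring R] [PartialOrder R]
    [IsOrderedRing R] {P : Matrix m n R} (hP : ∀ i j, 0 ≤ P i j) :
    Monotone fun v => Matrix.vecMul v P :=
  fun _ _ hvw j => dotProduct_le_dotProduct_of_nonneg_right hvw fun i => hP i j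

/-- Let `x^{k+1} = x^k P` be the exact probability iteration and
`x̂⁰ = x⁰`, `x̂^{k+1} = Γ_ε(x̂^k P)` the thresholded iteration, where `P` has
nonnegative entries and `x⁰` nonnegative components. Then for every `k ≥ 1`,
`∑_{i : x^k_i > ε} x^k_i ≥ ∑_i x̂^k_i`, i.e. `‖Γ_ε(x^k)‖₁ ≥ ‖x̂^k‖₁`. -/
theorem thresholded_mass_lower_bound (ε : ℝ) (hε : 0 ≤ ε) (N : ℕ)
    (P : Matrix (Fin N) (Fin N) ℝ) (hP : ∀ i j, 0 ≤ P i j)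
    (x0 : Fin N → ℝ) (hx0 : ∀ i, 0 ≤ x0 i)
    (x xh : ℕ → Fin N → ℝ)
    (hx_init : x 0 = x0) (hx_step : ∀ k, x (k + 1) = Matrix.vecMul (x k) P)
    (hxh_init : xh 0 = x0)
    (hxh_step : ∀ k, xh (k + 1) = Gamma ε (Matrix.vecMul (xh k) P)) :
    ∀ k, 1 ≤ k →
      ∑ i ∈ Finset.univ.filter (fun i => ε < x k i), x k i ≥ ∑ i, xh k i := by
  subst hx_init
  simp only [Gamma_eq_threshold] at hxh_step
  exact thresholded_mass_lower_bound_general (vecMul_monotone_of_nonneg hP)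
    (Matrix.zero_vecMul P).ge hx0 hx_step hxh_init.le hxh_step
end

section
/- Let ε ≥ 0, N ∈ ℕ, let P ∈ ℝ^{N×N} have all entries nonnegative, let x⁰ ∈ ℝ^N have all components nonnegative, and define x^{k+1} = x^k P and x̂⁰ = x⁰, x̂^{k+1} = Γ_ε(x̂^k P), where Γ_ε(v)_i = v_i if v_i > ε and 0 otherwise. Let k ≥ 1 and let D ⊆ {1,…,N} be any set of indices containing {i : x^k_i > ε}. Then ∑_{i ∈ D} x^k_i ≥ ∑_{i=1}^N x̂^k_i. -/
/-!
Right multiplication by `P` is monotone and fixes `0`, so both iterations stay nonnegative. For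
nonnegative vectors thresholding can only decrease components, and the comparison principle for
monotone iterations gives `x̂^k ≤ x^k`. A component of `x̂^k` that survives the last thresholding
exceeds `ε`, hence so does the same component of `x^k`: the support of `x̂^k` lies in `D`.
-/

theorem Gamma_eq_indicator (ε : ℝ) {N : ℕ} (v : Fin N → ℝ) :
    Gamma ε v = {i | ε < v i}.indicator v := by
  ext i
  simp only [Gamma, Set.indicator_apply, Set.mem_ofPred_eq]

theorem monotone_vecMul_of_nonneg {m n R : Type*} [Fintype m] [NonUnitalNonAssocSemiring R]
    [PartialOrder R] [IsOrderedAddMonoid R] [MulPosMono R] {P : Matrix m n R}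
    (hP : ∀ i j, 0 ≤ P i j) : Monotone fun v ↦ Matrix.vecMul v P :=
  fun _ _ huv j ↦ Finset.sum_le_sum fun i _ ↦ mul_le_mul_of_nonneg_right (huv i) (hP i j)

section

variable {ι M : Type*} [Zero M] [Preorder M] {f : (ι → M) → ι → M} {s : ℕ → Set ι}
  {x y : ℕ → ι → M}

theorem truncated_iteration_nonneg (hf : Monotone f) (hf0 : 0 ≤ f 0) (hy0 : 0 ≤ y 0)
    (hy : ∀ k, y (k + 1) = (s k).indicator (f (y k))) (k : ℕ) : 0 ≤ y k := by
  induction k with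
  | zero => exact hy0
  | succ k ih =>
    rw [hy]
    exact Set.indicator_nonneg fun i _ ↦ (hf0.trans (hf ih)) i

theorem truncated_iteration_le (hf : Monotone f) (hf0 : 0 ≤ f 0) (hy0 : 0 ≤ y 0)
    (hyx : y 0 ≤ x 0) (hx : ∀ k, f (x k) ≤ x (k + 1))
    (hy : ∀ k, y (k + 1) = (s k).indicator (f (y k))) (k : ℕ) : y k ≤ x k := by
  have hfy (k : ℕ) : 0 ≤ f (y k) := hf0.trans (hf (truncated_iteration_nonneg hf hf0 hy0 hy k))
  refine hf.seq_le_seq k hyx (fun k _ ↦ ?_) fun k _ ↦ hx k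
  rw [hy]
  exact Set.indicator_le_self' fun i _ ↦ hfy k i

end

section

variable {ι M : Type*} [Fintype ι] [AddCommMonoid M] [PartialOrder M] [IsOrderedAddMonoid M]

theorem sum_indicator_lt_le_sum {u v : ι → M} (huv : u ≤ v) (hv : 0 ≤ v) {ε : M} {D : Finset ι}
    (hD : ∀ i, ε < v i → i ∈ D) : ∑ i, {i | ε < u i}.indicator u i ≤ ∑ i ∈ D, v i := by
  have hsub : {i | ε < u i} ⊆ (D : Set ι) := fun i hi ↦ hD i (hi.trans_le (huv i))
  calc ∑ i, {i | ε < u i}.indicator u i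
      ≤ ∑ i, {i | ε < u i}.indicator v i :=
        Finset.sum_le_sum fun i _ ↦ Set.indicator_le_indicator (huv i)
    _ ≤ ∑ i, (D : Set ι).indicator v i :=
        Finset.sum_le_sum fun i _ ↦ Set.indicator_le_indicator_of_subset hsub hv i
    _ = ∑ i ∈ D, v i := Finset.sum_indicator_subset v D.subset_univ

theorem prob_in_uncertainty_set_lower_bound_general {ε : M} {f : (ι → M) → ι → M}
    (hf : Monotone f) (hf0 : 0 ≤ f 0) {x xh : ℕ → ι → M} (hxh_init : 0 ≤ xh 0)
    (h_init : xh 0 ≤ x 0) (hx_step : ∀ k, x (k + 1) = f (x k))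
    (hxh_step : ∀ k, xh (k + 1) = {i | ε < f (xh k) i}.indicator (f (xh k)))
    {k : ℕ} (hk : 1 ≤ k) {D : Finset ι} (hD : ∀ i, ε < x k i → i ∈ D) :
    ∑ i, xh k i ≤ ∑ i ∈ D, x k i := by
  obtain ⟨n, rfl⟩ := Nat.exists_eq_add_of_le' hk
  have hxh_nonneg : 0 ≤ xh n := truncated_iteration_nonneg hf hf0 hxh_init hxh_step n
  have hxh_le : xh n ≤ x n :=
    truncated_iteration_le hf hf0 hxh_init h_init (fun k ↦ (hx_step k).ge) hxh_step n
  rw [hx_step] at hD ⊢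
  rw [hxh_step]
  exact sum_indicator_lt_le_sum (hf hxh_le) (hf0.trans (hf (hxh_nonneg.trans hxh_le))) hD

end

/-- Let `x^{k+1} = x^k P` be the exact probability iteration and
`x̂⁰ = x⁰`, `x̂^{k+1} = Γ_ε(x̂^k P)` the thresholded iteration, where `P` has
nonnegative entries and `x⁰` nonnegative components. If `k ≥ 1` and `D` is
any set of indices containing every `i` with `x^k_i > ε`, then
`∑_{i ∈ D} x^k_i ≥ ∑_i x̂^k_i`. -/
theorem prob_in_uncertainty_set_lower_bound (ε : ℝ) (hε : 0 ≤ ε) (N : ℕ)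
    (P : Matrix (Fin N) (Fin N) ℝ) (hP : ∀ i j, 0 ≤ P i j)
    (x0 : Fin N → ℝ) (hx0 : ∀ i, 0 ≤ x0 i)
    (x xh : ℕ → Fin N → ℝ)
    (hx_init : x 0 = x0) (hx_step : ∀ k, x (k + 1) = Matrix.vecMul (x k) P)
    (hxh_init : xh 0 = x0)
    (hxh_step : ∀ k, xh (k + 1) = Gamma ε (Matrix.vecMul (xh k) P))
    (k : ℕ) (hk : 1 ≤ k) (D : Finset (Fin N))
    (hD : ∀ i, ε < x k i → i ∈ D) :
    ∑ i ∈ D, x k i ≥ ∑ i, xh k i := by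
  subst hx_init
  simp only [Gamma_eq_indicator] at hxh_step
  exact prob_in_uncertainty_set_lower_bound_general (monotone_vecMul_of_nonneg hP)
    (Matrix.zero_vecMul P).ge (hxh_init ▸ hx0) hxh_init.le hx_step hxh_step hk hD
end
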